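/- Let F be a bounded complex of free S-modules, let t be an indeterminate, and S_i = S[t]/(t^i). Then ⟨t^i⟩·H^{i+1}(End^•_{S_{i+1}}(F ⊗_S S_{i+1})) is isomorphic as an S-module to H^{i+1}(End^•_S(F)). In particular, since S_{i+1} is free over S and the ideal (t^i)/(t^{i+1}) ⊂ S_{i+1} is free of rank one over S, tensoring commutes with cohomology of the endomorphism complex. -/

import Mathlib

open Polynomial TensorProduct

section EndComplex

variable (R : Type*) [CommRing R] {M : Type*} [AddCommGroup M] [Module R M]

/-- The degree-`j` piece `End^j(F)` of the endomorphism complex of a complex `F`, realized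
internally: the graded module is `M = ⊕ₙ G n` and `End^j` consists of the endomorphisms
lowering the grading index by `j`. -/
def endE (G : ℤ → Submodule R M) (j : ℤ) : Submodule R (Module.End R M) where
  carrier := {φ | ∀ n, ∀ x ∈ G n, φ x ∈ G (n - j)}
  add_mem' := fun hφ hψ n x hx => by
    simpa using add_mem (hφ n x hx) (hψ n x hx)
  zero_mem' := fun n x hx => by
    simp
  smul_mem' := fun c φ hφ n x hx => by
    simpa using Submodule.smul_mem _ c (hφ n x hx)

/-- The differential of the endomorphism complex in degree `j`:
`φ ↦ d ∘ φ - (-1)^j φ ∘ d`. -/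
noncomputable def endD (d : Module.End R M) (j : ℤ) :
    Module.End R (Module.End R M) :=
  LinearMap.mulLeft R d - (Int.negOnePow j : ℤ) • LinearMap.mulRight R d

/-- Cocycles of the endomorphism complex in degree `j`. -/
noncomputable def endZ (G : ℤ → Submodule R M) (d : Module.End R M) (j : ℤ) :
    Submodule R (Module.End R M) :=
  endE R G j ⊓ LinearMap.ker (endD R d j)

/-- Coboundaries of the endomorphism complex in degree `j`. -/
noncomputable def endB (G : ℤ → Submodule R M) (d : Module.End R M) (j : ℤ) :
    Submodule R (Module.End R M) :=
  (endE R G (j - 1)).map (endD R d (j - 1))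

/-- Degree-`j` cohomology of the endomorphism complex. -/
noncomputable abbrev endCoh (G : ℤ → Submodule R M) (d : Module.End R M) (j : ℤ) :
    Type _ :=
  endZ R G d j ⧸ (endB R G d j).comap (endZ R G d j).subtype

end EndComplex

/-!
Base change `φ ↦ φ_A` maps `End(F)` to `End_A(A ⊗ F)`, and every `S`-linear form `f` on `A`
gives a contraction `A ⊗ F → F`, hence a map `End_A(A ⊗ F) → End(F)` in the other direction. Both
are `S`-linear cochain maps, so they act on cohomology. If `τ a = f(a) τ` for all `a`, then
contracting along `f` and changing base back is the identity after multiplication by `τ`; if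
`g(τ) = 1`, then contracting `τ φ_A` along `g` returns `φ`. So the image of `x ↦ τ x_A` is `τ H`,
and contraction along `g` is a left inverse to it. In `S[t]/(tⁿ⁺¹)` the element `τ = tⁿ` admits such
forms: the coefficients of `t⁰` and of `tⁿ`.
-/

section CochainMap

variable {S R R' : Type*} [CommRing S] [CommRing R] [Algebra S R] [CommRing R'] [Algebra S R']
  {M : Type*} [AddCommGroup M] [Module R M] [Module S M] [IsScalarTower S R M]
  {M' : Type*} [AddCommGroup M'] [Module R' M'] [Module S M'] [IsScalarTower S R' M']

lemma endD_apply (d : Module.End R M) (j : ℤ) (φ : Module.End R M) :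
    endD R d j φ = d * φ - (Int.negOnePow j : ℤ) • (φ * d) := rfl

/-- An `S`-linear map between endomorphism complexes over two `S`-algebras `R` and `R'` is a cochain
map if it preserves degrees and commutes with the differentials. The two algebras may differ, so
that this covers base change along `S → A` as well as maps back from `A` to `S`. -/
structure IsEndCochainMap (G : ℤ → Submodule R M) (d : Module.End R M) (G' : ℤ → Submodule R' M')
    (d' : Module.End R' M') (T : Module.End R M →ₗ[S] Module.End R' M') : Prop where
  map_mem_endE {j : ℤ} {φ : Module.End R M} : φ ∈ endE R G j → T φ ∈ endE R' G' j
  map_endD (j : ℤ) (φ : Module.End R M) : T (endD R d j φ) = endD R' d' j (T φ)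

namespace IsEndCochainMap

variable {G : ℤ → Submodule R M} {d : Module.End R M} {G' : ℤ → Submodule R' M'}
  {d' : Module.End R' M'} {T : Module.End R M →ₗ[S] Module.End R' M'}

lemma map_mem_endZ (hT : IsEndCochainMap G d G' d' T) {j : ℤ} {φ : Module.End R M}
    (hφ : φ ∈ endZ R G d j) : T φ ∈ endZ R' G' d' j := by
  refine ⟨hT.map_mem_endE hφ.1, ?_⟩
  rw [SetLike.mem_coe, LinearMap.mem_ker, ← hT.map_endD, LinearMap.mem_ker.1 hφ.2, map_zero]

lemma map_mem_endB (hT : IsEndCochainMap G d G' d' T) {j : ℤ} {φ : Module.End R M}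
    (hφ : φ ∈ endB R G d j) : T φ ∈ endB R' G' d' j := by
  obtain ⟨χ, hχ, rfl⟩ := hφ
  exact ⟨T χ, hT.map_mem_endE hχ, (hT.map_endD _ χ).symm⟩

/-- The restriction of a cochain map to cocycles. -/
noncomputable def endZMap (hT : IsEndCochainMap G d G' d' T) (j : ℤ) :
    endZ R G d j →ₗ[S] endZ R' G' d' j :=
  T.restrict (p := (endZ R G d j).restrictScalars S) (q := (endZ R' G' d' j).restrictScalars S)
    fun _ => hT.map_mem_endZ

/-- The map induced on cohomology by a cochain map. -/
noncomputable def endCohMap (hT : IsEndCochainMap G d G' d' T) (j : ℤ) :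
    endCoh R G d j →ₗ[S] endCoh R' G' d' j :=
  (Submodule.Quotient.restrictScalarsEquiv S _).toLinearMap ∘ₗ
    Submodule.mapQ (((endB R G d j).comap (endZ R G d j).subtype).restrictScalars S)
      (((endB R' G' d' j).comap (endZ R' G' d' j).subtype).restrictScalars S) (hT.endZMap j)
      (fun _ => hT.map_mem_endB) ∘ₗ
    (Submodule.Quotient.restrictScalarsEquiv S _).symm.toLinearMap

lemma endCohMap_mk (hT : IsEndCochainMap G d G' d' T) (j : ℤ) (φ : endZ R G d j) :
    hT.endCohMap j (Submodule.Quotient.mk φ) =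
      Submodule.Quotient.mk ⟨T φ, hT.map_mem_endZ φ.2⟩ := rfl

lemma endCohMap_smul_endCohMap (hT : IsEndCochainMap G d G' d' T)
    {T' : Module.End R' M' →ₗ[S] Module.End R M} (hT' : IsEndCochainMap G' d' G d T') (j : ℤ)
    {a : R'} {c : R} (h : ∀ φ, T' (a • T φ) = c • φ) (x : endCoh R G d j) :
    hT'.endCohMap j (a • hT.endCohMap j x) = c • x := by
  obtain ⟨φ, rfl⟩ := Submodule.mkQ_surjective _ x
  rw [Submodule.mkQ_apply, endCohMap_mk, ← Submodule.Quotient.mk_smul, endCohMap_mk,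
    ← Submodule.Quotient.mk_smul]
  exact congrArg Submodule.Quotient.mk (Subtype.ext (h φ.1))

lemma smul_endCohMap_endCohMap (hT : IsEndCochainMap G d G' d' T)
    {T' : Module.End R' M' →ₗ[S] Module.End R M} (hT' : IsEndCochainMap G' d' G d T') (j : ℤ)
    {a b : R'} (h : ∀ ψ, a • T (T' ψ) = b • ψ) (y : endCoh R' G' d' j) :
    a • hT.endCohMap j (hT'.endCohMap j y) = b • y := by
  obtain ⟨ψ, rfl⟩ := Submodule.mkQ_surjective _ y
  rw [Submodule.mkQ_apply, endCohMap_mk, endCohMap_mk, ← Submodule.Quotient.mk_smul,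
    ← Submodule.Quotient.mk_smul]
  exact congrArg Submodule.Quotient.mk (Subtype.ext (h ψ.1))

end IsEndCochainMap

end CochainMap

section BaseChange

variable {S : Type*} [CommRing S] {A : Type*} [CommRing A] [Algebra S A]
  {M : Type*} [AddCommGroup M] [Module S M] {N : Type*} [AddCommGroup N] [Module S N]

lemma baseChange_le_comap_baseChange {p : Submodule S M} {q : Submodule S N} {u : M →ₗ[S] N}
    (h : p ≤ q.comap u) : p.baseChange A ≤ (q.baseChange A).comap (u.baseChange A) := by
  rw [Submodule.baseChange_eq_span, Submodule.span_le]
  rintro _ ⟨m, hm, rfl⟩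
  exact Submodule.tmul_mem_baseChange_of_mem 1 (h hm)

variable (A) in
lemma isEndCochainMap_baseChange (G : ℤ → Submodule S M) (d : Module.End S M) :
    IsEndCochainMap G d (fun n => (G n).baseChange A) (d.baseChange A)
      (LinearMap.baseChangeHom S A M M) where
  map_mem_endE hφ n _ hx := baseChange_le_comap_baseChange (hφ n) hx
  map_endD j φ := by
    simp only [LinearMap.baseChangeHom_apply, endD_apply, map_sub, map_zsmul,
      LinearMap.baseChange_mul]

/-- Contraction of the scalars of `A ⊗ M` along a linear form on `A`, `a ⊗ m ↦ f a • m`. -/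
noncomputable def scalarContract (f : A →ₗ[S] S) : A ⊗[S] M →ₗ[S] M :=
  (TensorProduct.lid S M).toLinearMap ∘ₗ f.rTensor M

@[simp]
lemma scalarContract_tmul (f : A →ₗ[S] S) (a : A) (m : M) :
    scalarContract f (a ⊗ₜ[S] m) = f a • m := by
  simp [scalarContract]

lemma scalarContract_baseChange (f : A →ₗ[S] S) (u : M →ₗ[S] N) (x : A ⊗[S] M) :
    scalarContract f (u.baseChange A x) = u (scalarContract f x) := by
  induction x with
  | zero => simp
  | tmul a m => simp
  | add x y hx hy => simp only [map_add, hx, hy]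

lemma scalarContract_mem (f : A →ₗ[S] S) {p : Submodule S M} {x : A ⊗[S] M}
    (hx : x ∈ p.baseChange A) : scalarContract f x ∈ p := by
  obtain ⟨y, rfl⟩ := hx
  rw [scalarContract_baseChange]
  exact (scalarContract f y).2

lemma tmul_scalarContract {f : A →ₗ[S] S} {τ : A} (hf : ∀ a, τ * a = f a • τ) (x : A ⊗[S] M) :
    τ ⊗ₜ[S] scalarContract f x = τ • x := by
  induction x with
  | zero => simp
  | tmul a m =>
    rw [scalarContract_tmul, ← TensorProduct.smul_tmul, ← hf, TensorProduct.smul_tmul', smul_eq_mul]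
  | add x y hx hy => rw [map_add, TensorProduct.tmul_add, hx, hy, smul_add]

/-- The `S`-linear endomorphism of `M` obtained from an `A`-linear endomorphism of `A ⊗ M` by
restricting it to `1 ⊗ M` and contracting its values along a linear form on `A`. -/
noncomputable def endContract (f : A →ₗ[S] S) :
    Module.End A (A ⊗[S] M) →ₗ[S] Module.End S M where
  toFun ψ := scalarContract f ∘ₗ ψ.restrictScalars S ∘ₗ TensorProduct.mk S A M 1
  map_add' ψ χ := by ext; simp
  map_smul' c ψ := by ext; simp

lemma endContract_apply (f : A →ₗ[S] S) (ψ : Module.End A (A ⊗[S] M)) (m : M) :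
    endContract f ψ m = scalarContract f (ψ (1 ⊗ₜ m)) := rfl

lemma endContract_baseChange_mul (f : A →ₗ[S] S) (d : Module.End S M)
    (ψ : Module.End A (A ⊗[S] M)) : endContract f (d.baseChange A * ψ) = d * endContract f ψ :=
  LinearMap.ext fun _ => scalarContract_baseChange f d _

lemma endContract_mul_baseChange (f : A →ₗ[S] S) (d : Module.End S M)
    (ψ : Module.End A (A ⊗[S] M)) : endContract f (ψ * d.baseChange A) = endContract f ψ * d :=
  rfl

lemma isEndCochainMap_endContract (f : A →ₗ[S] S) (G : ℤ → Submodule S M) (d : Module.End S M) :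
    IsEndCochainMap (fun n => (G n).baseChange A) (d.baseChange A) G d (endContract f) where
  map_mem_endE hψ n _ hx :=
    scalarContract_mem f (hψ n _ (Submodule.tmul_mem_baseChange_of_mem 1 hx))
  map_endD j ψ := by
    rw [endD_apply, endD_apply, ← endContract_baseChange_mul, ← endContract_mul_baseChange,
      ← map_zsmul, ← map_sub]

lemma endContract_smul_baseChange (f : A →ₗ[S] S) (a : A) (φ : Module.End S M) :
    endContract f (a • φ.baseChange A) = f a • φ := by
  ext m
  simp [endContract_apply, TensorProduct.smul_tmul']

lemma smul_baseChange_endContract {f : A →ₗ[S] S} {τ : A} (hf : ∀ a, τ * a = f a • τ)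
    (ψ : Module.End A (A ⊗[S] M)) : τ • (endContract f ψ).baseChange A = τ • ψ := by
  ext m
  simpa [TensorProduct.smul_tmul', endContract_apply] using tmul_scalarContract hf (ψ (1 ⊗ₜ m))

end BaseChange

section Cohomology

variable {S : Type*} [CommRing S] {A : Type*} [CommRing A] [Algebra S A]
  {M : Type*} [AddCommGroup M] [Module S M] (G : ℤ → Submodule S M) (d : Module.End S M) (j : ℤ)

variable (A) in
/-- Base change on cohomology, `H^j(End(F)) → H^j(End_A(A ⊗ F))`. -/
noncomputable def endCohBaseChange :
    endCoh S G d j →ₗ[S] endCoh A (fun n => (G n).baseChange A) (d.baseChange A) j :=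
  (isEndCochainMap_baseChange A G d).endCohMap j

/-- Contraction along a linear form on cohomology, `H^j(End_A(A ⊗ F)) → H^j(End(F))`. -/
noncomputable def endCohContract (f : A →ₗ[S] S) :
    endCoh A (fun n => (G n).baseChange A) (d.baseChange A) j →ₗ[S] endCoh S G d j :=
  (isEndCochainMap_endContract f G d).endCohMap j

lemma endCohContract_smul_endCohBaseChange (f : A →ₗ[S] S) (a : A) (x : endCoh S G d j) :
    endCohContract G d j f (a • endCohBaseChange A G d j x) = f a • x :=
  (isEndCochainMap_baseChange A G d).endCohMap_smul_endCohMap (isEndCochainMap_endContract f G d) j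
    (endContract_smul_baseChange f a) x

lemma smul_endCohBaseChange_endCohContract {f : A →ₗ[S] S} {τ : A} (hf : ∀ a, τ * a = f a • τ)
    (y : endCoh A (fun n => (G n).baseChange A) (d.baseChange A) j) :
    τ • endCohBaseChange A G d j (endCohContract G d j f y) = τ • y :=
  (isEndCochainMap_baseChange A G d).smul_endCohMap_endCohMap (isEndCochainMap_endContract f G d) j
    (smul_baseChange_endContract hf) y

end Cohomology

section SpanSMul

variable {S A P Q : Type*} [CommRing S] [CommRing A] [Algebra S A] [AddCommGroup P] [Module S P]
  [AddCommGroup Q] [Module A Q] [Module S Q] [IsScalarTower S A Q]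

lemma range_smul_eq_span_smul_top {τ : A} {β : P →ₗ[S] Q} (h : ∀ y, ∃ x, τ • β x = τ • y) :
    LinearMap.range (τ • β) =
      (Ideal.span {τ} • (⊤ : Submodule A Q)).restrictScalars S := by
  ext z
  rw [Submodule.restrictScalars_mem, Submodule.ideal_span_singleton_smul,
    Submodule.mem_smul_pointwise_iff_exists]
  constructor
  · rintro ⟨x, rfl⟩
    exact ⟨β x, trivial, rfl⟩
  · rintro ⟨y, -, rfl⟩
    exact h y

variable (S A Q) in
/-- `RestrictScalars S A Q` carries the `S`-action through `A`; when `Q` is already an `S`-module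
compatibly with `A`, this is the given action. -/
def restrictScalarsLinearEquiv : RestrictScalars S A Q ≃ₗ[S] Q where
  __ := RestrictScalars.addEquiv S A Q
  map_smul' c x := algebraMap_smul A c (RestrictScalars.addEquiv S A Q x)

/-- A map `β : P → Q` whose multiple `τ • β` has a left inverse and fills `τ • Q` identifies `τ • Q`
with `P`. -/
noncomputable def spanSMulTopEquiv {τ : A} {β : P →ₗ[S] Q} {γ : Q →ₗ[S] P}
    (hγ : Function.LeftInverse γ (τ • β)) (h : ∀ y, ∃ x, τ • β x = τ • y) :
    RestrictScalars S A ↥(Ideal.span {τ} • (⊤ : Submodule A Q)) ≃ₗ[S] P :=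
  restrictScalarsLinearEquiv S A _ ≪≫ₗ
    ((Submodule.restrictScalarsEquiv S A Q _).restrictScalars S).symm ≪≫ₗ
    LinearEquiv.ofEq _ _ (range_smul_eq_span_smul_top h).symm ≪≫ₗ
    (LinearEquiv.ofLeftInverse hγ).symm

end SpanSMul

/-- The isomorphism `(τ) · H^j(End_A(A ⊗ F)) ≅ H^j(End(F))` for an element `τ` of an `S`-algebra `A`
that generates an ideal free of rank one over `S` and split in `A`: this is what the linear forms
`f` and `g` express. -/
noncomputable def spanSMulEndCohBaseChangeEquiv {S A M : Type*} [CommRing S] [CommRing A]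
    [Algebra S A] [AddCommGroup M] [Module S M] (G : ℤ → Submodule S M) (d : Module.End S M)
    (j : ℤ) {τ : A} {f g : A →ₗ[S] S} (hf : ∀ a, τ * a = f a • τ) (hg : g τ = 1) :
    RestrictScalars S A ↥(Ideal.span {τ} •
      (⊤ : Submodule A (endCoh A (fun n => (G n).baseChange A) (d.baseChange A) j)))
        ≃ₗ[S] endCoh S G d j :=
  spanSMulTopEquiv (β := endCohBaseChange A G d j) (γ := endCohContract G d j g)
    (fun x => by
      rw [Pi.smul_apply, endCohContract_smul_endCohBaseChange, hg, one_smul])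
    fun y => ⟨endCohContract G d j f y, smul_endCohBaseChange_endCohContract G d j hf y⟩

section TruncatedPolynomial

variable {S : Type*} [CommRing S]

/-- The coefficient of `X ^ k`, for `k < n`, as a linear form on `S[X] ⧸ (X ^ n)`. -/
noncomputable def truncCoeff {k n : ℕ} (hk : k < n) :
    (S[X] ⧸ Ideal.span {(X : S[X]) ^ n}) →ₗ[S] S :=
  ((Ideal.span {(X : S[X]) ^ n}).restrictScalars S).liftQ (lcoeff S k) fun _ hp =>
    X_pow_dvd_iff.1 (Ideal.mem_span_singleton.1 hp) k hk

lemma truncCoeff_mk {k n : ℕ} (hk : k < n) (p : S[X]) :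
    truncCoeff hk (Ideal.Quotient.mk (Ideal.span {(X : S[X]) ^ n}) p) = p.coeff k := rfl

lemma mk_X_pow_mul_eq_truncCoeff_smul (n : ℕ) (a : S[X] ⧸ Ideal.span {(X : S[X]) ^ (n + 1)}) :
    Ideal.Quotient.mk _ X ^ n * a =
      truncCoeff n.succ_pos a • Ideal.Quotient.mk (Ideal.span {(X : S[X]) ^ (n + 1)}) X ^ n := by
  obtain ⟨p, rfl⟩ := Ideal.Quotient.mk_surjective a
  rw [truncCoeff_mk, ← map_pow, ← map_mul]
  change _ = Ideal.Quotient.mk _ (p.coeff 0 • X ^ n)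
  rw [Ideal.Quotient.mk_eq_mk_iff_sub_mem, Ideal.mem_span_singleton, smul_eq_C_mul]
  exact ⟨p.divX, by linear_combination -X ^ n * p.X_mul_divX_add⟩

lemma truncCoeff_mk_X_pow {k n : ℕ} (hk : k < n) :
    truncCoeff hk (Ideal.Quotient.mk (Ideal.span {(X : S[X]) ^ n}) X ^ k) = 1 := by
  rw [← map_pow, truncCoeff_mk, coeff_X_pow_self]

end TruncatedPolynomial

theorem stmt14_general (S : Type*) [CommRing S] (M : Type*) [AddCommGroup M] [Module S M]
    (G : ℤ → Submodule S M) (_hInternal : DirectSum.IsInternal fun n => G n)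
    (d : Module.End S M) (_hd2 : d * d = 0) (_hdlow : ∀ n, ∀ x ∈ G n, d x ∈ G (n - 1))
    (i : ℕ) (j : ℤ) :
    Nonempty
      ((RestrictScalars S (S[X] ⧸ Ideal.span {(X : S[X]) ^ (i + 1)})
        ↥((Ideal.span {(Ideal.Quotient.mk (Ideal.span {(X : S[X]) ^ (i + 1)}) X) ^ i}) •
          (⊤ : Submodule (S[X] ⧸ Ideal.span {(X : S[X]) ^ (i + 1)})
            (endCoh (S[X] ⧸ Ideal.span {(X : S[X]) ^ (i + 1)})
              (fun n => (G n).baseChange (S[X] ⧸ Ideal.span {(X : S[X]) ^ (i + 1)}))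
              (LinearMap.baseChange (S[X] ⧸ Ideal.span {(X : S[X]) ^ (i + 1)}) d) j))))
        ≃ₗ[S] endCoh S G d j) :=
  ⟨spanSMulEndCohBaseChangeEquiv G d j (mk_X_pow_mul_eq_truncCoeff_smul i)
    (truncCoeff_mk_X_pow i.lt_succ_self)⟩

/-- Let `S` be Noetherian, `F` a bounded complex of finitely generated free `S`-modules
(realized internally as a graded free module `M = ⊕ₙ G n` with square-zero differential `d`
lowering the grading by one), `t` an indeterminate and `S_{i+1} = S[t]/(t^{i+1})`.  Then
`⟨t^i⟩·H^{i+1}(End_{S_{i+1}}(F ⊗_S S_{i+1}))` is isomorphic as an `S`-module to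
`H^{i+1}(End_S(F))`: since `S_{i+1}` is free over `S` and the ideal `(t^i)/(t^{i+1})` is
free of rank one over `S`, tensoring commutes with cohomology of the endomorphism
complex. -/
theorem stmt14 (S : Type*) [CommRing S] [IsNoetherianRing S]
    (M : Type*) [AddCommGroup M] [Module S M]
    (G : ℤ → Submodule S M)
    (hInternal : DirectSum.IsInternal fun n => G n)
    (hfree : ∀ n, Module.Free S (G n)) (hfg : ∀ n, Module.Finite S (G n))
    (hbdd : ∃ a b : ℤ, ∀ n : ℤ, (n < a ∨ b < n) → G n = ⊥)
    (d : Module.End S M) (hd2 : d * d = 0)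
    (hdlow : ∀ n, ∀ x ∈ G n, d x ∈ G (n - 1))
    (i : ℕ) (hi : 1 ≤ i) :
    Nonempty
      ((RestrictScalars S (S[X] ⧸ Ideal.span {(X : S[X]) ^ (i + 1)})
        ↥((Ideal.span {(Ideal.Quotient.mk (Ideal.span {(X : S[X]) ^ (i + 1)}) X) ^ i}) •
          (⊤ : Submodule (S[X] ⧸ Ideal.span {(X : S[X]) ^ (i + 1)})
            (endCoh (S[X] ⧸ Ideal.span {(X : S[X]) ^ (i + 1)})
              (fun n => (G n).baseChange (S[X] ⧸ Ideal.span {(X : S[X]) ^ (i + 1)}))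
              (LinearMap.baseChange (S[X] ⧸ Ideal.span {(X : S[X]) ^ (i + 1)}) d)
              ((i : ℤ) + 1)))))
        ≃ₗ[S] endCoh S G d ((i : ℤ) + 1)) :=
  stmt14_general S M G hInternal d hd2 hdlow i _
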